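/- arXiv:1903.01844 — 2 statements merged into one kernel-verified Lean document; each statement's English description precedes it below -/
import Mathlib

section
/- For any integer k ≥ 1, γ̄(ℤ, {1, -3k}) = (k+1)/(3k+2). -/
open Filter

open scoped Classical in
noncomputable def lowerDensity (U : Set ℤ) : ℝ :=
  Filter.liminf (fun n : ℕ =>
    (((Finset.Icc (-(n:ℤ)) (n:ℤ)).filter (fun m => m ∈ U)).card : ℝ) / (2*(n:ℝ)+1))
    Filter.atTop

/-- `D` is a dominating set of the Cayley digraph `Γ(ℤ, S)`. -/
def IsDominating (S D : Set ℤ) : Prop :=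
  ∀ v : ℤ, v ∈ D ∨ ∃ u ∈ D, ∃ s ∈ S, v = u + s

/-- The domination ratio of `Γ(ℤ, S)`. -/
noncomputable def domRatio (S : Set ℤ) : ℝ :=
  sInf {x : ℝ | ∃ D : Set ℤ, IsDominating S D ∧ x = lowerDensity D}


namespace DomAux

/-- sum of `f` over the window `[a, a+m)` -/
def T (f : ℤ → ℤ) (a : ℤ) (m : ℕ) : ℤ := ∑ i ∈ Finset.range m, f (a + i)

lemma T_succ (f : ℤ → ℤ) (a : ℤ) (m : ℕ) : T f a (m+1) = T f a m + f (a + m) := by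
  simp [T, Finset.sum_range_succ]

lemma T_succ' (f : ℤ → ℤ) (a : ℤ) (m : ℕ) : T f a (m+1) = f a + T f (a+1) m := by
  simp only [T, Finset.sum_range_succ']
  rw [add_comm]
  congr 1
  · simp
  · apply Finset.sum_congr rfl
    intro i _
    congr 1
    push_cast
    ring

lemma T_add (f : ℤ → ℤ) (a : ℤ) (m n : ℕ) : T f a (m+n) = T f a m + T f (a+m) n := by
  induction n with
  | zero => simp [T]
  | succ n ih =>
    rw [← add_assoc, T_succ, ih, T_succ]
    push_cast
    rw [add_assoc a]
    ring

lemma T_nonneg {f : ℤ → ℤ} (h0 : ∀ v, 0 ≤ f v) (a : ℤ) (m : ℕ) : 0 ≤ T f a m :=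
  Finset.sum_nonneg (fun _ _ => h0 _)

lemma T_shift {f : ℤ → ℤ} (h0 : ∀ v, 0 ≤ f v) (h1 : ∀ v, f v ≤ 1) (a : ℤ) (m t : ℕ) :
    T f (a+t) m ≤ T f a m + t ∧ T f a m ≤ T f (a+t) m + t := by
  induction t with
  | zero => simp
  | succ t ih =>
    have e1 := T_succ f (a+t) m
    have e2 := T_succ' f (a+t) m
    have := h0 (a+t); have := h1 (a+t)
    have := h0 (a+t+m); have := h1 (a+t+m)
    push_cast
    rw [← add_assoc a]
    omega

open scoped Classical in
noncomputable def X (D : Set ℤ) (v : ℤ) : ℤ := if v ∈ D then 1 else 0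

open scoped Classical in
noncomputable def P (D : Set ℤ) (v : ℤ) : ℤ := if v ∈ D ∧ v + 1 ∈ D then 1 else 0

open scoped Classical in
noncomputable def Sm (D : Set ℤ) (v : ℤ) : ℤ :=
  if v ∈ D ∧ (v + 1 ∈ D ∨ v + 2 ∈ D) then 1 else 0

lemma X0 (D v) : 0 ≤ X D v := by unfold X; split_ifs <;> simp
lemma X1 (D v) : X D v ≤ 1 := by unfold X; split_ifs <;> simp
lemma P0 (D v) : 0 ≤ P D v := by unfold P; split_ifs <;> simp
lemma P1 (D v) : P D v ≤ 1 := by unfold P; split_ifs <;> simp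
lemma S0 (D v) : 0 ≤ Sm D v := by unfold Sm; split_ifs <;> simp
lemma S1 (D v) : Sm D v ≤ 1 := by unfold Sm; split_ifs <;> simp

/-- elementary form of domination -/
def Dom (k : ℕ) (D : Set ℤ) : Prop := ∀ v : ℤ, v ∈ D ∨ v - 1 ∈ D ∨ v + 3 * k ∈ D

lemma pointwise {k : ℕ} {D : Set ℤ} (h : Dom k D) (v : ℤ) :
    1 + P D (v+1) + Sm D v ≤ X D (v+2) + X D (v+1) + X D v + P D (v+1+3*k) := by
  have h1 := h (v+1)
  have h2 := h (v+2)
  have e1 : v + 1 - 1 = v := by ring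
  have e2 : v + 2 - 1 = v + 1 := by ring
  have e3 : v + 1 + 1 = v + 2 := by ring
  have e4 : v + 1 + 3 * (k:ℤ) + 1 = v + 2 + 3 * k := by ring
  rw [e1] at h1
  rw [e2] at h2
  unfold P Sm X
  rw [e3, e4]
  by_cases a : v ∈ D <;> by_cases b : v + 1 ∈ D <;> by_cases c : v + 2 ∈ D <;>
    simp_all
  all_goals (split_ifs <;> simp)

lemma sum_ineq {k : ℕ} {D : Set ℤ} (h : Dom k D) (a : ℤ) (m : ℕ) :
    m + T (Sm D) a m ≤ 3 * T (X D) a m + 3 * k + 3 := by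
  have key : m + T (P D) (a+1) m + T (Sm D) a m ≤
      T (X D) (a+2) m + T (X D) (a+1) m + T (X D) a m + T (P D) (a+1+3*k) m := by
    induction m with
    | zero => simp [T]
    | succ m ih =>
      have := pointwise h (a+m)
      simp only [T_succ]
      push_cast
      rw [show a + 1 + (m:ℤ) = a + m + 1 by ring, show a + 2 + (m:ℤ) = a + m + 2 by ring,
        show a + 1 + 3 * (k:ℤ) + m = a + m + 1 + 3 * k by ring]
      linarith
  have s1 := (T_shift (X0 D) (X1 D) a m 1).1
  have s2 := (T_shift (X0 D) (X1 D) a m 2).1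
  have s3 := (T_shift (P0 D) (P1 D) (a+1) m (3*k)).1
  push_cast at s1 s2 s3
  linarith

lemma excess {D : Set ℤ} (r : ℕ) : ∀ e : ℤ, e ∈ D → e + r ∈ D →
    (∀ u, e ≤ u → u < e + r → u ∈ D → u + 1 ∉ D ∧ u + 2 ∉ D) →
    (r % 3 = 1 → ∃ w, e + 2 ≤ w ∧ w + 2 ≤ e + r ∧ w - 1 ∉ D ∧ w ∉ D ∧ w + 1 ∉ D) ∧
    (r % 3 = 2 → ∃ w w', e + 2 ≤ w ∧ w < w' ∧ w' + 2 ≤ e + r ∧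
      (w - 1 ∉ D ∧ w ∉ D ∧ w + 1 ∉ D) ∧ (w' - 1 ∉ D ∧ w' ∉ D ∧ w' + 1 ∉ D)) := by
  induction r using Nat.strong_induction_on with
  | _ r ih =>
    intro e he ht hs
    rcases Nat.eq_zero_or_pos r with rfl | hr
    · simp
    obtain ⟨n1, n2⟩ := hs e le_rfl (by omega) he
    have r1 : r ≠ 1 := by rintro rfl; exact n1 (by simpa using ht)
    have r2 : r ≠ 2 := by rintro rfl; exact n2 (by simpa using ht)
    have q1 : e + 2 - 1 = e + 1 := by ring
    have q2 : e + 2 + 1 = e + 3 := by ring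
    have q3 : e + 3 - 1 = e + 2 := by ring
    have q4 : e + 3 + 1 = e + 4 := by ring
    by_cases h3 : e + 3 ∈ D
    · have hc : ((r - 3 : ℕ) : ℤ) = r - 3 := by omega
      obtain ⟨i1, i2⟩ := ih (r-3) (by omega) (e+3) h3
        (by rw [hc]; convert ht using 1; ring)
        (fun u hu hu' => hs u (by omega) (by omega))
      refine ⟨fun hm => ?_, fun hm => ?_⟩
      · obtain ⟨w, a, b, c⟩ := i1 (by omega)
        exact ⟨w, by omega, by omega, c⟩
      · obtain ⟨w, w', a, b, c, d⟩ := i2 (by omega)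
        exact ⟨w, w', by omega, by omega, by omega, d⟩
    have r3 : r ≠ 3 := by rintro rfl; exact h3 (by simpa using ht)
    have hw : e + 2 - 1 ∉ D ∧ e + 2 ∉ D ∧ e + 2 + 1 ∉ D := by
      rw [q1, q2]; exact ⟨n1, n2, h3⟩
    refine ⟨fun hm => ⟨e+2, le_rfl, by omega, hw⟩, fun hm => ?_⟩
    by_cases h4 : e + 4 ∈ D
    · have hc : ((r - 4 : ℕ) : ℤ) = r - 4 := by omega
      obtain ⟨i1, i2⟩ := ih (r-4) (by omega) (e+4) h4
        (by rw [hc]; convert ht using 1; ring)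
        (fun u hu hu' => hs u (by omega) (by omega))
      obtain ⟨w, a, b, c⟩ := i1 (by omega)
      exact ⟨e+2, w, le_rfl, by omega, by omega, hw, c⟩
    · exact ⟨e+2, e+3, le_rfl, by omega, by omega, hw, by rw [q3, q4]; exact ⟨n2, h3, h4⟩⟩

lemma T_ge_one {f : ℤ → ℤ} (h0 : ∀ v, 0 ≤ f v) (a : ℤ) (m : ℕ) (u : ℤ) (h1 : a ≤ u)
    (h2 : u < a + m) (hu : f u = 1) : 1 ≤ T f a m := by
  obtain ⟨i, rfl⟩ : ∃ i : ℕ, u = a + i := ⟨(u - a).toNat, by omega⟩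
  rw [← hu]
  exact Finset.single_le_sum (f := fun i : ℕ => f (a + i)) (fun _ _ => h0 _)
    (Finset.mem_range.2 (by omega))

/-- One step: from `d ∈ D` move on to `d + t ∈ D` with `j` small gaps seen. -/
lemma step {k : ℕ} {D : Set ℤ} (h : Dom k D) (d : ℤ) (hd : d ∈ D) :
    ∃ t : ℕ, ∃ j : ℤ, 0 < t ∧ t ≤ 2 * (3 * k + 2) ∧ d + t ∈ D ∧
      (t : ℤ) ≤ (3 * k + 2) * j ∧ j ≤ T (Sm D) d t := by
  by_cases hs : d + 1 ∈ D ∨ d + 2 ∈ D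
  · have h1 : Sm D d = 1 := by simp [Sm, hd, hs]
    rcases hs with hs | hs
    · exact ⟨1, 1, by omega, by omega, hs, by omega,
        T_ge_one (S0 D) d 1 d (by omega) (by omega) h1⟩
    · exact ⟨2, 1, by omega, by omega, hs, by omega,
        T_ge_one (S0 D) d 2 d (by omega) (by omega) h1⟩
  push Not at hs
  have hL : d + ((3 * k + 2 : ℕ) : ℤ) ∈ D := by
    rcases h (d+2) with h | h | h
    · exact absurd h hs.2
    · exact absurd (by convert h using 1; ring) hs.1
    · convert h using 1; push_cast; ring
  by_cases hu : ∃ u, d ≤ u ∧ u < d + ((3 * k + 2 : ℕ) : ℤ) ∧ u ∈ D ∧ (u + 1 ∈ D ∨ u + 2 ∈ D)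
  · obtain ⟨u, a, b, c⟩ := hu
    exact ⟨3*k+2, 1, by omega, by omega, hL, by omega,
      T_ge_one (S0 D) d _ u a b (by simp only [Sm, if_pos c])⟩
  push Not at hu
  obtain ⟨w, w', a, b, c, ⟨p1, p2, p3⟩, ⟨p4, p5, p6⟩⟩ :=
    (excess (3*k+2) d hd hL hu).2 (by omega)
  have g : ∀ v, v - 1 ∉ D → v ∉ D → v + 1 ∉ D → v + 3 * k ∈ D ∧ v + 3 * k + 1 ∈ D := by
    intro v a b c
    have h1 := h v
    have h2 := h (v+1)
    rw [show v + 1 - 1 = v by ring, show v + 1 + 3 * (k:ℤ) = v + 3 * k + 1 by ring] at h2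
    tauto
  obtain ⟨g1, g2⟩ := g w p1 p2 p3
  obtain ⟨g3, g4⟩ := g w' p4 p5 p6
  have e1 : Sm D (w + 3*k) = 1 := by simp [Sm, g1, g2]
  have e2 : Sm D (w' + 3*k) = 1 := by simp [Sm, g3, g4]
  obtain ⟨t, ht⟩ : ∃ t : ℕ, (t:ℤ) = w' + 3 * k - d := ⟨(w' + 3 * k - d).toNat, by omega⟩
  push_cast at c
  refine ⟨t+1, 2, by omega, by omega, ?_, by push_cast; omega, ?_⟩
  · convert g4 using 1; push_cast; omega
  · rw [T_succ, show d + (t:ℤ) = w' + 3 * k by omega, e2]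
    have := T_ge_one (S0 D) d t (w + 3*k) (by omega) (by omega) e1
    omega

lemma small_count {k : ℕ} {D : Set ℤ} (h : Dom k D) (m : ℕ) : ∀ d ∈ D,
    (m:ℤ) - 2 * (3 * k + 2) ≤ (3 * k + 2) * T (Sm D) d m := by
  induction m using Nat.strong_induction_on with
  | _ m ih =>
    intro d hd
    by_cases hm : m ≤ 2 * (3 * k + 2)
    · have := T_nonneg (S0 D) d m
      have : 0 ≤ (3 * (k:ℤ) + 2) * T (Sm D) d m := by positivity
      omega
    obtain ⟨t, j, t0, t1, ht, hj, hT⟩ := step h d hd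
    obtain ⟨r, rfl⟩ : ∃ r, m = t + r := ⟨m - t, by omega⟩
    have := ih r (by omega) _ ht
    rw [T_add]
    have : (3 * (k:ℤ) + 2) * j ≤ (3 * (k:ℤ) + 2) * T (Sm D) d t := by gcongr
    push_cast
    linarith

lemma lower {k : ℕ} {D : Set ℤ} (h : Dom k D) : ∃ C : ℤ, ∀ (a : ℤ) (m : ℕ),
    ((k:ℤ) + 1) * m ≤ (3 * k + 2) * T (X D) a m + C := by
  refine ⟨(3 * k + 2) * (6 * k + 10), fun a m => ?_⟩
  obtain ⟨t, ht, hd⟩ : ∃ t : ℕ, t ≤ 3 * k + 1 ∧ a + t ∈ D := by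
    rcases h (a+1) with h | h | h
    · exact ⟨1, by omega, by simpa using h⟩
    · exact ⟨0, by omega, by simpa using h⟩
    · exact ⟨3*k+1, le_rfl, by convert h using 1; push_cast; ring⟩
  have h1 := small_count h m _ hd
  have h2 := (T_shift (S0 D) (S1 D) a m t).1
  have h3 := sum_ineq h a m
  have h4 : T (Sm D) (a+t) m ≤ 3 * T (X D) a m + 6 * k + 4 - m := by
    have : (t:ℤ) ≤ 3 * k + 1 := by exact_mod_cast ht
    linarith
  have h5 : (3 * (k:ℤ) + 2) * T (Sm D) (a+t) m ≤
    (3 * (k:ℤ) + 2) * (3 * T (X D) a m + 6 * k + 4 - m) := by gcongr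
  nlinarith

lemma Dom_iff (k : ℕ) (D : Set ℤ) : IsDominating {1, -(3*(k:ℤ))} D ↔ Dom k D := by
  constructor
  · intro h v
    rcases h v with h | ⟨u, hu, s, hs, rfl⟩
    · exact Or.inl h
    · rcases hs with rfl | hs
      · right; left; simpa using hu
      · rw [Set.mem_singleton_iff] at hs
        subst hs
        right; right; simpa using hu
  · intro h v
    rcases h v with h | h | h
    · exact Or.inl h
    · exact Or.inr ⟨_, h, 1, by simp, by ring⟩
    · exact Or.inr ⟨_, h, -(3*(k:ℤ)), by simp, by ring⟩

open scoped Classical in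
lemma card_eq (D : Set ℤ) (n : ℕ) :
    (((Finset.Icc (-(n:ℤ)) (n:ℤ)).filter (fun m => m ∈ D)).card : ℤ)
      = T (X D) (-n) (2*n+1) := by
  rw [Finset.card_filter]
  push_cast
  unfold T X
  refine (Finset.sum_bij (fun (i:ℕ) _ => -(n:ℤ) + i) ?_ ?_ ?_ ?_).symm
  · intro i hi
    simp only [Finset.mem_range] at hi
    simp only [Finset.mem_Icc]
    omega
  · intro i _ j _ hij
    simpa using hij
  · intro b hb
    simp only [Finset.mem_Icc] at hb
    exact ⟨(b + n).toNat, by simp only [Finset.mem_range]; omega, by omega⟩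
  · intro i _
    rfl

/-- the extremal set -/
def E (k : ℕ) : Set ℤ := {v | (v % (3 * k + 2)) % 3 = 0}

/-- division data, generalised so that `omega` can be used -/
lemma emod_char (L v q r : ℤ) (h : v = L * q + r) (h0 : 0 ≤ r) (h1 : r < L) :
    v % L = r ∧ v / L = q := by
  have := Int.ediv_emod_unique (a := v) (b := L) (r := r) (q := q) (by omega)
  have := this.2 ⟨by rw [h]; ring, h0, h1⟩
  exact ⟨this.2, this.1⟩

lemma E_dom (k : ℕ) : Dom k (E k) := by
  intro v
  simp only [E, Set.mem_ofPred_eq]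
  set L : ℤ := 3 * k + 2 with hL
  have hLp : 0 < L := by omega
  have h := Int.emod_add_mul_ediv v L
  have a := Int.emod_nonneg v hLp.ne'
  have b := Int.emod_lt_of_pos v hLp
  set r := v % L
  set q := v / L
  have : r % 3 = 0 ∨ r % 3 = 1 ∨ r % 3 = 2 := by omega
  rcases this with h3 | h3 | h3
  · exact Or.inl h3
  · right; left
    rw [(emod_char L (v-1) q (r-1) (by linarith) (by omega) (by omega)).1]
    omega
  · right; right
    rw [(emod_char L (v+3*k) (q+1) (r-2) (by linarith) (by omega) (by omega)).1]
    omega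

/-- counting function of the extremal set -/
def F (k : ℕ) (v : ℤ) : ℤ := (v / (3*k+2)) * (k+1) + (v % (3*k+2) + 2) / 3

lemma F_succ (k : ℕ) (v : ℤ) : F k (v+1) = F k v + X (E k) v := by
  have hX : X (E k) v = if (v % (3 * k + 2)) % 3 = 0 then 1 else 0 := by
    have hm : v ∈ E k ↔ (v % (3 * k + 2)) % 3 = 0 := Iff.rfl
    unfold X
    by_cases hv : (v % (3 * (k:ℤ) + 2)) % 3 = 0
    · rw [if_pos (hm.2 hv), if_pos hv]
    · rw [if_neg (fun h => hv (hm.1 h)), if_neg hv]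
  rw [hX]
  simp only [F]
  set L : ℤ := 3 * k + 2 with hL
  have hLp : 0 < L := by omega
  have h := Int.emod_add_mul_ediv v L
  have a := Int.emod_nonneg v hLp.ne'
  have b := Int.emod_lt_of_pos v hLp
  set r := v % L
  set q := v / L
  by_cases hr : r + 1 < L
  · obtain ⟨e1, e2⟩ := emod_char L (v+1) q (r+1) (by linarith) (by omega) (by omega)
    rw [e1, e2]
    split_ifs <;> omega
  · have hr : r = L - 1 := by omega
    obtain ⟨e1, e2⟩ := emod_char L (v+1) (q+1) 0 (by linarith) (by omega) (by omega)
    rw [e1, e2, if_neg (by omega), show (r + 2) / 3 = k + 1 by omega]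
    norm_num
    ring

lemma F_bd (k : ℕ) (v : ℤ) : (k+1) * v - (3*k+2) * (k+1) ≤ (3*k+2) * F k v ∧
    (3*k+2) * F k v ≤ (k+1) * v + (3*k+2) * (k+1) := by
  simp only [F]
  set L : ℤ := 3 * k + 2 with hL
  have hLp : 0 < L := by omega
  have h := Int.emod_add_mul_ediv v L
  have a := Int.emod_nonneg v hLp.ne'
  have b := Int.emod_lt_of_pos v hLp
  set r := v % L
  set q := v / L
  have c : 0 ≤ (r + 2) / 3 := by omega
  have d : (r + 2) / 3 ≤ k + 1 := by omega
  set y := (r + 2) / 3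
  have c' : 0 ≤ L * y := by positivity
  have d' : L * y ≤ L * (k + 1) := by gcongr
  have e1 : 0 ≤ ((k:ℤ)+1) * r := by positivity
  have e2 : ((k:ℤ)+1) * r ≤ (k+1) * L := by gcongr
  rw [← h]
  constructor <;> nlinarith

lemma upper (k : ℕ) : ∃ C : ℤ, ∀ (a : ℤ) (m : ℕ),
    (3 * k + 2) * T (X (E k)) a m ≤ ((k:ℤ) + 1) * m + C := by
  refine ⟨2 * ((3*k+2) * (k+1)), fun a m => ?_⟩
  have : T (X (E k)) a m = F k (a + m) - F k a := by
    induction m with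
    | zero => simp [T]
    | succ m ih =>
      rw [T_succ, ih]
      push_cast
      rw [← add_assoc, F_succ]
      ring
  rw [this]
  have h1 := (F_bd k a).1
  have h2 := (F_bd k (a+m)).2
  linarith

lemma tendsto_aux (ρ c : ℝ) :
    Tendsto (fun n : ℕ => ρ + c / (2*(n:ℝ)+1)) atTop (nhds ρ) := by
  have : Tendsto (fun n : ℕ => c / (2*(n:ℝ)+1)) atTop (nhds 0) := by
    apply Tendsto.const_div_atTop
    apply tendsto_atTop_add_const_right
    exact (tendsto_natCast_atTop_atTop).const_mul_atTop (by norm_num)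
  simpa using this.const_add ρ

open scoped Classical in
lemma seq_bd (D : Set ℤ) :
    (∀ n : ℕ, 0 ≤ (((Finset.Icc (-(n:ℤ)) (n:ℤ)).filter (fun m => m ∈ D)).card : ℝ) / (2*(n:ℝ)+1)) ∧
    (∀ n : ℕ, (((Finset.Icc (-(n:ℤ)) (n:ℤ)).filter (fun m => m ∈ D)).card : ℝ) / (2*(n:ℝ)+1) ≤ 1) := by
  refine ⟨fun n => by positivity, fun n => ?_⟩
  rw [div_le_one (by positivity)]
  have : ((Finset.Icc (-(n:ℤ)) (n:ℤ)).filter (fun m => m ∈ D)).card ≤ 2 * n + 1 := by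
    refine (Finset.card_filter_le _ _).trans ?_
    rw [Int.card_Icc]
    omega
  exact_mod_cast this

lemma density_ge {k : ℕ} {D : Set ℤ} (h : Dom k D) :
    ((k:ℝ)+1) / (3*k+2) ≤ lowerDensity D := by
  obtain ⟨C, hC⟩ := lower h
  have ht := tendsto_aux (((k:ℝ)+1) / (3*k+2)) (-(C / (3*k+2)))
  rw [← ht.liminf_eq]
  unfold lowerDensity
  refine liminf_le_liminf (Eventually.of_forall fun n => ?_) ht.isBoundedUnder_ge
    (isBoundedUnder_of ⟨1, (seq_bd D).2⟩ : IsBoundedUnder (· ≤ ·) _ _).isCoboundedUnder_ge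
  have := hC (-n) (2*n+1)
  rw [← card_eq] at this
  have this := (Int.cast_le (R := ℝ)).2 this
  push_cast at this
  have hp : (0:ℝ) < 3*k+2 := by positivity
  have hq : (0:ℝ) < 2*n+1 := by positivity
  rw [le_div_iff₀ hq]
  field_simp
  linarith

lemma density_le (k : ℕ) : lowerDensity (E k) ≤ ((k:ℝ)+1) / (3*k+2) := by
  obtain ⟨C, hC⟩ := upper k
  have ht := tendsto_aux (((k:ℝ)+1) / (3*k+2)) (C / (3*k+2))
  rw [← ht.liminf_eq]
  unfold lowerDensity
  refine liminf_le_liminf (Eventually.of_forall fun n => ?_)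
    (isBoundedUnder_of ⟨0, (seq_bd (E k)).1⟩) ht.isBoundedUnder_le.isCoboundedUnder_ge
  have := hC (-n) (2*n+1)
  rw [← card_eq] at this
  have this : _ ≤ ((((k:ℤ) + 1) * ((2*n+1 : ℕ):ℤ) + C : ℤ) : ℝ) := Int.cast_le.2 this
  push_cast at this
  have hp : (0:ℝ) < 3*k+2 := by positivity
  have hq : (0:ℝ) < 2*n+1 := by positivity
  rw [div_le_iff₀ hq]
  field_simp
  linarith

end DomAux

theorem stmt_17 (k : ℤ) (hk : 1 ≤ k) :
    domRatio {1, -(3*k)} = ((k:ℝ) + 1) / (3*(k:ℝ) + 2) := by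
  lift k to ℕ using (by omega)
  rw [Int.cast_natCast]
  apply IsLeast.csInf_eq
  constructor
  · exact ⟨DomAux.E k, (DomAux.Dom_iff k _).2 (DomAux.E_dom k),
      le_antisymm (DomAux.density_ge (DomAux.E_dom k)) (DomAux.density_le k)⟩
  · rintro x ⟨D, hD, rfl⟩
    exact DomAux.density_ge ((DomAux.Dom_iff k _).1 hD)
end

section
/- For any integer k ≥ 1, γ̄(ℤ, {1, 3k}) = 2k/(6k-1), and likewise γ̄(ℤ, {1, -3k+1}) = 2k/(6k-1) for k ≥ 1 with -3k+1 ∉ {0,1} (i.e., k ≥ 1). -/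
open Filter

/-- Sum over the symmetric interval. -/
noncomputable def symSum (f : ℤ → ℝ) (n : ℕ) : ℝ := ∑ v ∈ Finset.Icc (-(n:ℤ)) (n:ℤ), f v

open scoped Classical in
/-- Indicator of a set of integers. -/
noncomputable def ind (D : Set ℤ) (v : ℤ) : ℝ := if v ∈ D then 1 else 0

lemma ind_cases (D : Set ℤ) (v : ℤ) : (v ∈ D ∧ ind D v = 1) ∨ (v ∉ D ∧ ind D v = 0) := by
  unfold ind
  by_cases h : v ∈ D <;> simp [h]

lemma ind_nonneg (D : Set ℤ) (v : ℤ) : 0 ≤ ind D v := by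
  rcases ind_cases D v with h | h <;> rw [h.2] <;> norm_num

lemma ind_le_one (D : Set ℤ) (v : ℤ) : ind D v ≤ 1 := by
  rcases ind_cases D v with h | h <;> rw [h.2] <;> norm_num

lemma lowerDensity_eq (D : Set ℤ) :
    lowerDensity D = Filter.liminf (fun n : ℕ => symSum (ind D) n / (2*(n:ℝ)+1)) atTop := by
  unfold lowerDensity
  congr 1
  funext n
  congr 1
  unfold symSum ind
  simp [Finset.sum_boole]

lemma symSum_const (c : ℝ) (n : ℕ) : symSum (fun _ => c) n = (2*(n:ℝ)+1) * c := by
  unfold symSum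
  rw [Finset.sum_const, Int.card_Icc, nsmul_eq_mul]
  congr 1
  have : ((n:ℤ) + 1 - -(n:ℤ)).toNat = 2*n+1 := by omega
  rw [this]; push_cast; ring

lemma symSum_mono {f g : ℤ → ℝ} (h : ∀ v, f v ≤ g v) (n : ℕ) : symSum f n ≤ symSum g n :=
  Finset.sum_le_sum fun v _ => h v

lemma symSum_add (f g : ℤ → ℝ) (n : ℕ) :
    symSum (fun v => f v + g v) n = symSum f n + symSum g n := Finset.sum_add_distrib

lemma symSum_shift_one (f : ℤ → ℝ) (n : ℕ) :
    symSum (fun v => f (v+1)) n - symSum f n = f (n+1) - f (-n) := by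
  unfold symSum
  rw [← Finset.sum_sub_distrib]
  induction n with
  | zero => simp
  | succ m ih =>
    have : Finset.Icc (-((m+1:ℕ):ℤ)) ((m+1:ℕ):ℤ) =
        insert (-((m:ℤ)+1)) (insert ((m:ℤ)+1) (Finset.Icc (-(m:ℤ)) (m:ℤ))) := by
      ext x; simp only [Finset.mem_Icc, Finset.mem_insert]; push_cast; omega
    rw [this, Finset.sum_insert, Finset.sum_insert, ih]
    · push_cast
      have e : -((m:ℤ)+1)+1 = -m := by ring
      rw [e]; ring
    · simp
    · simp only [Finset.mem_Icc, Finset.mem_insert]; omega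

lemma symSum_shift_nat (f : ℤ → ℝ) (h0 : ∀ v, 0 ≤ f v) (h1 : ∀ v, f v ≤ 1) (c n : ℕ) :
    |symSum (fun v => f (v+c)) n - symSum f n| ≤ c := by
  induction c with
  | zero => simp
  | succ c ih =>
    have h := symSum_shift_one (fun v => f (v+c)) n
    have e : (fun v : ℤ => f (v + ((c+1:ℕ):ℤ))) = fun v => f (v+1+c) := by
      funext v; congr 1; push_cast; ring
    rw [e]
    have a1 := h0 ((n:ℤ)+1+c)
    have a2 := h1 ((n:ℤ)+1+c)
    have a3 := h0 (-(n:ℤ)+c)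
    have a4 := h1 (-(n:ℤ)+c)
    rw [abs_le] at *
    push_cast
    constructor <;> linarith [ih.1, ih.2]

lemma symSum_shift (f : ℤ → ℝ) (h0 : ∀ v, 0 ≤ f v) (h1 : ∀ v, f v ≤ 1) (c : ℤ) (n : ℕ) :
    |symSum (fun v => f (v+c)) n - symSum f n| ≤ |(c:ℝ)| := by
  obtain ⟨m, rfl | rfl⟩ := c.eq_nat_or_neg
  · simpa using symSum_shift_nat f h0 h1 m n
  · have := symSum_shift_nat (fun v => f (v + -(m:ℤ))) (fun v => h0 _) (fun v => h1 _) m n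
    simp only [add_neg_cancel_right, add_assoc, add_neg_cancel, add_zero] at this
    rw [abs_sub_comm]
    simpa using this

lemma symSum_multi (f : ℤ → ℝ) (h0 : ∀ v, 0 ≤ f v) (h1 : ∀ v, f v ≤ 1) (c : ℕ → ℤ) (M : ℕ) :
    ∃ C : ℝ, ∀ n, |symSum (fun v => ∑ i ∈ Finset.range M, f (v + c i)) n - M * symSum f n| ≤ C := by
  induction M with
  | zero => exact ⟨0, fun n => by simp [symSum]⟩
  | succ M ih =>
    obtain ⟨C, hC⟩ := ih
    refine ⟨C + |(c M : ℝ)|, fun n => ?_⟩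
    have a := hC n
    have b := symSum_shift f h0 h1 (c M) n
    simp only [Finset.sum_range_succ]
    rw [symSum_add]
    push_cast
    rw [abs_le] at *
    constructor <;> linarith [a.1, a.2, b.1, b.2]

/-- Every window of length `2a-1`, `a = 3k`, contains the start of a short gap. -/
lemma window (D : Set ℤ) (k : ℤ) (hk : 1 ≤ k)
    (H : ∀ v, v ∈ D ∨ v - 1 ∈ D ∨ v - 3*k ∈ D) (w : ℤ) :
    ∃ x, w + 1 ≤ x ∧ x ≤ w + (6*k-1) ∧ x ∈ D ∧ (x+1 ∈ D ∨ x+2 ∈ D) := by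
  by_contra! hc
  have step : ∀ x ∈ D, w + 3*k-1 ≤ x → x ≤ w + (6*k-1) → x+2-3*k ∈ D ∧ x + 3 ∈ D := by
    intro x hx h1 h2
    obtain ⟨n1, n2⟩ := hc x (by omega) h2 hx
    have A : x+2-3*k ∈ D := by
      rcases H (x+2) with h | h | h
      · exact absurd h n2
      · exact absurd (by convert h using 1; ring) n1
      · exact h
    refine ⟨A, ?_⟩
    have B := (hc _ (by omega) (by omega) A).1
    rcases H (x+3) with h | h | h
    · exact h
    · exact absurd (by convert h using 1; ring) n2
    · exact absurd (by convert h using 1; ring) B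
  have ex : ∃ x ∈ D, w + 3*k-1 ≤ x ∧ x ≤ w + 3*k+2 := by
    by_contra! hn
    have N : ∀ j : ℤ, -1 ≤ j → j ≤ 2 → w + 3*k + j ∉ D := fun j h1 h2 h => by
      have := hn _ h (by omega); omega
    have P : ∀ j : ℤ, 0 ≤ j → j ≤ 2 → w + j ∈ D := fun j h1 h2 => by
      rcases H (w+3*k+j) with h | h | h
      · exact absurd h (N j (by omega) h2)
      · exact absurd (by convert h using 1; ring) (N (j-1) (by omega) (by omega))
      · convert h using 1; ring
    exact (hc (w+1) (by omega) (by omega) (P 1 (by omega) (by omega))).1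
      (by convert P 2 (by omega) (by omega) using 1; ring)
  obtain ⟨x, hx, h1, h2⟩ := ex
  have run : ∀ j : ℕ, (j:ℤ) ≤ k - 1 → x + 3*j ∈ D := by
    intro j
    induction j with
    | zero => intro _; simpa using hx
    | succ j ih =>
      intro hj
      push_cast at hj
      have := (step _ (ih (by omega)) (by omega) (by omega)).2
      convert this using 1; push_cast; ring
  have r := run (k-1).toNat (by omega)
  rw [Int.toNat_of_nonneg (by omega)] at r
  have q := (step _ r (by omega) (by omega)).1
  have e : x + 3*(k-1) + 2 - 3*k = x - 1 := by ring
  rw [e] at q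
  exact (hc (x-1) (by omega) (by omega) q).1 (by simpa using hx)

lemma count_lower (D : Set ℤ) (K : ℕ) (hK : 1 ≤ K)
    (H : ∀ v, v ∈ D ∨ v - 1 ∈ D ∨ v - 3*(K:ℤ) ∈ D) :
    ∃ C : ℝ, ∀ n : ℕ, 6*(K:ℝ) * (2*(n:ℝ)+1) ≤ 3 * (6*(K:ℝ)-1) * symSum (ind D) n + C := by
  set d := ind D with hd
  have d0 := ind_nonneg D
  have d1 := ind_le_one D
  set s1 : ℤ → ℝ := fun v => d v * d (v+1) with hs1
  set s2 : ℤ → ℝ := fun v => d v * (1 - d (v+1)) * d (v+2) with hs2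
  have s10 : ∀ v, 0 ≤ s1 v ∧ s1 v ≤ 1 := fun v => by
    rcases ind_cases D v with ⟨_, h⟩ | ⟨_, h⟩ <;>
    rcases ind_cases D (v+1) with ⟨_, h'⟩ | ⟨_, h'⟩ <;> simp [hs1, hd, h, h']
  have s20 : ∀ v, 0 ≤ s2 v ∧ s2 v ≤ 1 := fun v => by
    rcases ind_cases D v with ⟨_, h⟩ | ⟨_, h⟩ <;>
    rcases ind_cases D (v+1) with ⟨_, h'⟩ | ⟨_, h'⟩ <;>
    rcases ind_cases D (v+2) with ⟨_, h''⟩ | ⟨_, h''⟩ <;> simp [hs2, hd, h, h', h'']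
  set sh : ℤ → ℝ := fun v => s1 v + s2 v with hsh
  have sh0 : ∀ v, 0 ≤ sh v ∧ sh v ≤ 1 := fun v => by
    rcases ind_cases D v with ⟨_, h⟩ | ⟨_, h⟩ <;>
    rcases ind_cases D (v+1) with ⟨_, h'⟩ | ⟨_, h'⟩ <;>
    rcases ind_cases D (v+2) with ⟨_, h''⟩ | ⟨_, h''⟩ <;> simp [hsh, hs1, hs2, hd, h, h', h'']
  have pt : ∀ v, 1 + (s1 (v + -1) + (s1 v + s2 (v + -1))) ≤
      d (v + -1) + (d v + (d (v+1) + s1 (v + -(3*(K:ℤ))))) := by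
    intro v
    have e1 : v + -1 + 1 = v := by ring
    have e2 : v + -1 + 2 = v + 1 := by ring
    have hm := (s10 (v + -(3*(K:ℤ)))).1
    simp only [hs1, hs2, e1, e2] at hm ⊢
    rcases ind_cases D (v + -1) with ⟨m, h⟩ | ⟨m, h⟩ <;>
    rcases ind_cases D v with ⟨m', h'⟩ | ⟨m', h'⟩ <;>
    rcases ind_cases D (v+1) with ⟨m'', h''⟩ | ⟨m'', h''⟩ <;>
    simp only [← hd] at h h' h'' <;> rw [h, h', h''] <;> try linarith
    have A : v + -(3*(K:ℤ)) ∈ D := by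
      rcases H v with g | g | g
      · exact absurd g m'
      · exact absurd g m
      · exact g
    have B : v + -(3*(K:ℤ)) + 1 ∈ D := by
      rcases H (v+1) with g | g | g
      · exact absurd g m''
      · exact absurd (by simpa using g) m'
      · convert g using 1; ring
    have A' : d (v + -(3*(K:ℤ))) = 1 := by simp [hd, ind, A]
    have B' : d (v + -(3*(K:ℤ)) + 1) = 1 := by simp [hd, ind, B]
    rw [A', B']; norm_num
  have win : ∀ v, 1 ≤ ∑ i ∈ Finset.range (6*K-1), sh (v + ((i:ℤ) + 1)) := by
    intro v
    obtain ⟨x, x1, x2, x3, x4⟩ := window D K (by omega) H v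
    have hx : 1 ≤ sh x := by
      rcases ind_cases D x with ⟨m, h⟩ | ⟨m, h⟩ <;>
      rcases ind_cases D (x+1) with ⟨m', h'⟩ | ⟨m', h'⟩ <;>
      rcases ind_cases D (x+2) with ⟨m'', h''⟩ | ⟨m'', h''⟩ <;>
      simp_all
    refine hx.trans ?_
    have hmem : (x - v - 1).toNat ∈ Finset.range (6*K-1) := by
      rw [Finset.mem_range]; omega
    have := Finset.single_le_sum (f := fun i : ℕ => sh (v + ((i:ℤ) + 1)))
      (fun i _ => (sh0 _).1) hmem
    refine le_trans (le_of_eq ?_) this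
    congr 1; omega
  obtain ⟨C, hC⟩ := symSum_multi sh (fun v => (sh0 v).1) (fun v => (sh0 v).2)
    (fun i => (i:ℤ)+1) (6*K-1)
  have cast : ((6*K-1 : ℕ) : ℝ) = 6*(K:ℝ) - 1 := by
    rw [Nat.cast_sub (by omega)]; push_cast; ring
  have hK' : (1:ℝ) ≤ K := by exact_mod_cast hK
  refine ⟨C + (6*(K:ℝ)-1) * (4 + 3*K), fun n => ?_⟩
  have w1 := symSum_mono win n
  rw [symSum_const] at w1
  have w2 := (abs_le.1 (hC n)).2
  rw [cast] at w2
  have p1 := symSum_mono pt n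
  simp only [symSum_add] at p1
  rw [symSum_const] at p1
  have q1 := abs_le.1 (symSum_shift s1 (fun v => (s10 v).1) (fun v => (s10 v).2) (-1) n)
  have q2 := abs_le.1 (symSum_shift s2 (fun v => (s20 v).1) (fun v => (s20 v).2) (-1) n)
  have q3 := abs_le.1 (symSum_shift s1 (fun v => (s10 v).1) (fun v => (s10 v).2) (-(3*(K:ℤ))) n)
  have q4 := abs_le.1 (symSum_shift d d0 d1 (-1) n)
  have q5 := abs_le.1 (symSum_shift d d0 d1 1 n)
  have ab : |((-(3*(K:ℤ)) : ℤ) : ℝ)| = 3*K := by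
    push_cast; rw [abs_neg, abs_of_nonneg (by positivity)]
  rw [ab] at q3
  norm_num at q1 q2 q4 q5
  have shs : symSum sh n = symSum s1 n + symSum s2 n := symSum_add s1 s2 n
  have key : (2*(n:ℝ)+1) + symSum sh n ≤ 3 * symSum d n + (4+3*K) := by
    rw [shs]; linarith [q1.1, q2.1, q3.2, q4.2, q5.2]
  have := mul_le_mul_of_nonneg_left key (show (0:ℝ) ≤ 6*(K:ℝ)-1 by linarith)
  linarith

lemma tendsto_aux (L C : ℝ) :
    Tendsto (fun n : ℕ => L + C / (2*(n:ℝ)+1)) atTop (nhds L) := by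
  have h : Tendsto (fun n : ℕ => 2*(n:ℝ)+1) atTop atTop :=
    tendsto_atTop_add_const_right _ _ (tendsto_natCast_atTop_atTop.const_mul_atTop (by norm_num))
  simpa using (h.const_div_atTop C).const_add L

lemma symSum_ind_le (D : Set ℤ) (n : ℕ) : symSum (ind D) n / (2*(n:ℝ)+1) ≤ 1 := by
  have := symSum_mono (ind_le_one D) n
  rw [symSum_const] at this
  rw [div_le_one (by positivity)]; linarith

lemma density_lower (D : Set ℤ) (K : ℕ) (hK : 1 ≤ K)
    (H : ∀ v, v ∈ D ∨ v - 1 ∈ D ∨ v - 3*(K:ℤ) ∈ D) :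
    2*(K:ℝ) / (6*(K:ℝ)-1) ≤ lowerDensity D := by
  obtain ⟨C, hC⟩ := count_lower D K hK H
  have hK' : (1:ℝ) ≤ K := by exact_mod_cast hK
  have hp : (0:ℝ) < 6*(K:ℝ)-1 := by linarith
  rw [lowerDensity_eq, ← (tendsto_aux (2*(K:ℝ) / (6*(K:ℝ)-1)) (-C/(3*(6*(K:ℝ)-1)))).liminf_eq]
  refine liminf_le_liminf (Eventually.of_forall fun n => ?_)
    (tendsto_aux _ _).isBoundedUnder_ge
    (IsBoundedUnder.isCoboundedUnder_ge ⟨1, by simpa using ⟨0, fun n _ => symSum_ind_le D n⟩⟩)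
  have hn : (0:ℝ) < 2*(n:ℝ)+1 := by positivity
  have := hC n
  rw [div_div, div_add_div _ _ hp.ne' (by positivity), div_le_div_iff₀ (by positivity) hn]
  have h2 := mul_le_mul_of_nonneg_left this (show 0 ≤ (6*(K:ℝ)-1) * (2*(n:ℝ)+1) by positivity)
  linarith

/-- The extremal periodic set. -/
def extremal (K : ℕ) : Set ℤ := {x | (2*x) % (6*(K:ℤ)-1) % 3 = 0}

lemma extremal_dom (K : ℕ) (hK : 1 ≤ K) (v : ℤ) :
    v ∈ extremal K ∨ v - 1 ∈ extremal K ∨ v - 3*(K:ℤ) ∈ extremal K := by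
  simp only [extremal, Set.mem_ofPred_eq]
  set N : ℤ := 6*(K:ℤ)-1 with hN
  have hN0 : 0 < N := by omega
  have r0 := Int.emod_nonneg (2*v) hN0.ne'
  have r1 := Int.emod_lt_of_pos (2*v) hN0
  have hdiv := Int.emod_add_mul_ediv (2*v) N
  set r := (2*v) % N
  set q := (2*v) / N
  have h3 : r % 3 = 0 ∨ r % 3 = 1 ∨ r % 3 = 2 := by omega
  rcases h3 with h | h | h
  · exact Or.inl h
  · right; right
    have : 2*(v - 3*(K:ℤ)) = (r-1) + N * (q-1) := by
      rw [mul_sub, ← hdiv, hN]; ring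
    rw [this, Int.add_mul_emod_self_left, Int.emod_eq_of_lt (a := r-1) (b := N) (by omega) (by omega)]
    omega
  · right; left
    have : 2*(v - 1) = (r-2) + N * q := by
      rw [mul_sub, ← hdiv]; ring
    rw [this, Int.add_mul_emod_self_left, Int.emod_eq_of_lt (a := r-2) (b := N) (by omega) (by omega)]
    omega

lemma sum_three (K : ℕ) :
    ∑ i ∈ Finset.range (3*K), (if ((i:ℤ) % 3 = 0) then (1:ℝ) else 0) = K := by
  induction K with
  | zero => simp
  | succ K ih =>
    rw [show 3*(K+1) = 3*K+1+1+1 by ring, Finset.sum_range_succ, Finset.sum_range_succ,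
      Finset.sum_range_succ, ih]
    rw [if_pos (by omega), if_neg (by omega), if_neg (by omega)]
    push_cast; ring

lemma extremal_sum (K : ℕ) (hK : 1 ≤ K) (v : ℤ) :
    ∑ i ∈ Finset.range (6*K-1), ind (extremal K) (v + 3*(K:ℤ)*i) = 2*K := by
  set N : ℤ := 6*(K:ℤ)-1 with hN
  set χ : ℤ → ℝ := fun y => if y % N % 3 = 0 then 1 else 0 with hχ
  have per : ∀ y, χ (y + N) = χ y := fun y => by simp [hχ]
  have e : ∀ i : ℕ, ind (extremal K) (v + 3*(K:ℤ)*i) = χ (2*v + i) := by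
    intro i
    have : 2*(v + 3*(K:ℤ)*i) = (2*v + i) + N * i := by rw [hN]; ring
    simp only [ind, extremal, Set.mem_ofPred_eq, hχ, ← hN]
    rw [this, Int.add_mul_emod_self_left]
  simp only [e]
  have cast : ((6*K-1 : ℕ) : ℤ) = N := by omega
  have sh : ∀ w : ℤ, ∑ i ∈ Finset.range (6*K-1), χ (w + 1 + i) =
      ∑ i ∈ Finset.range (6*K-1), χ (w + i) := by
    intro w
    have a := Finset.sum_range_succ (fun i : ℕ => χ (w + i)) (6*K-1)
    have b := Finset.sum_range_succ' (fun i : ℕ => χ (w + i)) (6*K-1)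
    rw [a, cast, per] at b
    simp only [Nat.cast_zero, add_zero] at b
    rw [add_right_cancel b]
    refine Finset.sum_congr rfl fun i _ => ?_
    congr 1; push_cast; ring
  have all : ∀ w : ℤ, ∑ i ∈ Finset.range (6*K-1), χ (w + i) =
      ∑ i ∈ Finset.range (6*K-1), χ (0 + i) := by
    intro w
    induction w using Int.induction_on with
    | zero => rfl
    | succ j ih => rw [sh, ih]
    | pred j ih =>
      rw [← ih, ← sh (-(j:ℤ) - 1)]
      simp
  rw [all]
  have := sum_three (2*K)
  rw [show 3*(2*K) = (6*K-1)+1 by omega, Finset.sum_range_succ, if_neg (by omega), add_zero] at this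
  push_cast at this
  rw [← this]
  refine Finset.sum_congr rfl fun i hi => ?_
  rw [Finset.mem_range] at hi
  simp only [hχ, zero_add]
  rw [Int.emod_eq_of_lt (a := (i:ℤ)) (b := N) (by omega) (by omega)]

lemma extremal_density (K : ℕ) (hK : 1 ≤ K) :
    lowerDensity (extremal K) = 2*(K:ℝ) / (6*(K:ℝ)-1) := by
  obtain ⟨C, hC⟩ := symSum_multi (ind (extremal K)) (ind_nonneg _) (ind_le_one _)
    (fun i => 3*(K:ℤ)*i) (6*K-1)
  have cast : ((6*K-1 : ℕ) : ℝ) = 6*(K:ℝ) - 1 := by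
    rw [Nat.cast_sub (by omega)]; push_cast; ring
  have hK' : (1:ℝ) ≤ K := by exact_mod_cast hK
  have hp : (0:ℝ) < 6*(K:ℝ)-1 := by linarith
  simp only [extremal_sum K hK, symSum_const, cast] at hC
  rw [lowerDensity_eq]
  refine Tendsto.liminf_eq ?_
  refine tendsto_of_tendsto_of_tendsto_of_le_of_le
    (tendsto_aux (2*(K:ℝ) / (6*(K:ℝ)-1)) (-C/(6*(K:ℝ)-1)))
    (tendsto_aux (2*(K:ℝ) / (6*(K:ℝ)-1)) (C/(6*(K:ℝ)-1))) ?_ ?_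
  · intro n
    have hn : (0:ℝ) < 2*(n:ℝ)+1 := by positivity
    have := (abs_le.1 (hC n)).2
    have e : 2*(K:ℝ) / (6*(K:ℝ)-1) + (-C/(6*(K:ℝ)-1)) / (2*(n:ℝ)+1)
      = ((2*(n:ℝ)+1)*(2*K) - C) / (6*(K:ℝ)-1) / (2*(n:ℝ)+1) := by field_simp; ring
    simp only
    rw [e]
    refine div_le_div_of_nonneg_right ?_ hn.le
    rw [div_le_iff₀ hp]; linarith
  · intro n
    have hn : (0:ℝ) < 2*(n:ℝ)+1 := by positivity
    have := (abs_le.1 (hC n)).1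
    have e : 2*(K:ℝ) / (6*(K:ℝ)-1) + (C/(6*(K:ℝ)-1)) / (2*(n:ℝ)+1)
      = ((2*(n:ℝ)+1)*(2*K) + C) / (6*(K:ℝ)-1) / (2*(n:ℝ)+1) := by field_simp
    simp only
    rw [e]
    refine div_le_div_of_nonneg_right ?_ hn.le
    rw [le_div_iff₀ hp]; linarith

lemma dom_iff (S D : Set ℤ) (K : ℕ) (hS : S = {1, 3*(K:ℤ)}) :
    IsDominating S D ↔ ∀ v, v ∈ D ∨ v - 1 ∈ D ∨ v - 3*(K:ℤ) ∈ D := by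
  subst hS
  refine forall_congr' fun v => or_congr_right ?_
  constructor
  · rintro ⟨u, hu, s, hs | hs, rfl⟩
    · left; rw [hs]; simpa using hu
    · right; rw [Set.mem_singleton_iff.1 hs]; simpa using hu
  · rintro (h | h)
    · exact ⟨_, h, 1, by simp, by ring⟩
    · exact ⟨_, h, 3*(K:ℤ), by simp, by ring⟩

lemma dom_neg_iff (D : Set ℤ) (K : ℕ) :
    IsDominating {1, -(3*(K:ℤ))+1} D ↔ IsDominating {1, 3*(K:ℤ)} {x | -x ∈ D} := by
  rw [dom_iff _ _ K rfl]
  simp only [Set.mem_ofPred_eq]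
  constructor
  · intro h v
    rcases h (-v+1) with g | ⟨u, hu, s, hs | hs, e⟩
    · right; left; convert g using 1; ring
    · left; convert hu using 1; rw [hs] at e; omega
    · right; right; convert hu using 1; rw [Set.mem_singleton_iff.1 hs] at e; omega
  · intro h v
    rcases h (-v+1) with g | g | g
    · exact Or.inr ⟨_, g, 1, by simp, by ring⟩
    · left; convert g using 1; ring
    · exact Or.inr ⟨_, g, -(3*(K:ℤ))+1, by simp, by ring⟩

lemma density_neg (D : Set ℤ) : lowerDensity {x | -x ∈ D} = lowerDensity D := by
  rw [lowerDensity_eq, lowerDensity_eq]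
  congr 1
  funext n
  congr 1
  unfold symSum
  refine Finset.sum_bij' (fun x _ => -x) (fun x _ => -x) ?_ ?_ ?_ ?_ ?_
  · intro x; simp only [Finset.mem_Icc]; omega
  · intro x; simp only [Finset.mem_Icc]; omega
  · simp
  · simp
  · intro x _; simp [ind]

theorem stmt_18 (k : ℤ) (hk : 1 ≤ k) :
    domRatio {1, 3*k} = 2*(k:ℝ) / (6*(k:ℝ) - 1) ∧
    domRatio {1, -(3*k) + 1} = 2*(k:ℝ) / (6*(k:ℝ) - 1) := by
  obtain ⟨K, rfl⟩ := Int.eq_ofNat_of_zero_le (show 0 ≤ k by omega)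
  have hK : 1 ≤ K := by omega
  have first : domRatio {1, 3*(K:ℤ)} = 2*(K:ℝ) / (6*(K:ℝ) - 1) := by
    refine IsLeast.csInf_eq ⟨⟨extremal K, (dom_iff _ _ K rfl).2 (extremal_dom K hK),
      (extremal_density K hK).symm⟩, ?_⟩
    rintro x ⟨D, hD, rfl⟩
    exact density_lower D K hK ((dom_iff _ _ K rfl).1 hD)
  have second : domRatio {1, -(3*(K:ℤ)) + 1} = domRatio {1, 3*(K:ℤ)} := by
    unfold domRatio
    congr 1
    ext x
    constructor
    · rintro ⟨D, hD, rfl⟩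
      exact ⟨_, (dom_neg_iff D K).1 hD, (density_neg D).symm⟩
    · rintro ⟨D, hD, rfl⟩
      exact ⟨{x | -x ∈ D}, (dom_neg_iff _ K).2 (by simpa using hD), (density_neg D).symm⟩
  rw [second, first]
  simp
end
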